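/- arXiv:1805.11701 — 12 statements merged into one kernel-verified Lean document; each statement's English description precedes it below -/
import Mathlib

section
/- Let n ≥ 1, let Y be a real symmetric positive definite n×n matrix and let σ be a real number. Then there exists a unique symmetric positive definite n×n matrix X satisfying X² + σ²X = Y, namely X = (Y + (σ⁴/4)I)^{1/2} − (σ²/2)I, where (·)^{1/2} denotes the unique positive semidefinite square root and I is the identity matrix. -/
open scoped MatrixOrder Matrix.Norms.L2Operator in
lemma psd_sq_inj {n : ℕ} {A B : Matrix (Fin n) (Fin n) ℝ} (hA : A.PosSemidef) (hB : B.PosSemidef)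
    (h : A ^ 2 = B ^ 2) : A = B := by
  rw [← CFC.sqrt_sq A hA.nonneg, h, CFC.sqrt_sq B hB.nonneg]

/-- Let `n ≥ 1`, let `Y` be a real symmetric positive definite `n×n` matrix
and let `σ` be a real number.  Then there exists a unique symmetric positive definite matrix
`X` with `X² + σ²X = Y`, namely `X = (Y + (σ⁴/4)•I)^{1/2} − (σ²/2)•I`, where the square root
is the unique positive semidefinite square root (here parametrized by `S`). -/
theorem stmt_0 (n : ℕ) (hn : 1 ≤ n) (Y : Matrix (Fin n) (Fin n) ℝ) (σ : ℝ)
    (hY : Y.PosDef)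
    (S : Matrix (Fin n) (Fin n) ℝ) (hS : S.PosSemidef)
    (hS2 : S ^ 2 = Y + (σ ^ 4 / 4) • 1) :
    (∃! X : Matrix (Fin n) (Fin n) ℝ, X.PosDef ∧ X ^ 2 + σ ^ 2 • X = Y) ∧
    (S - (σ ^ 2 / 2) • 1).PosDef ∧
    (S - (σ ^ 2 / 2) • 1) ^ 2 + σ ^ 2 • (S - (σ ^ 2 / 2) • 1) = Y := by
  have key : ∀ X : Matrix (Fin n) (Fin n) ℝ,
      (X + (σ ^ 2 / 2) • 1) ^ 2 = X ^ 2 + σ ^ 2 • X + (σ ^ 4 / 4) • 1 := by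
    intro X
    simp only [pow_two X, pow_two (X + _), add_mul, mul_add, smul_mul_assoc, mul_smul_comm,
      one_mul, mul_one]
    module
  have heq : (S - (σ ^ 2 / 2) • 1) ^ 2 + σ ^ 2 • (S - (σ ^ 2 / 2) • 1) = Y := by
    have := key (S - (σ ^ 2 / 2) • 1)
    rw [sub_add_cancel, hS2] at this
    exact (add_right_cancel this).symm
  have hc : 0 ≤ σ ^ 2 / 2 := by positivity
  have h1 : ((σ ^ 2 / 2) • (1 : Matrix (Fin n) (Fin n) ℝ)).PosSemidef :=
    Matrix.PosSemidef.one.smul hc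
  have hpd : (S - (σ ^ 2 / 2) • 1).PosDef := by
    have hH : (S - (σ ^ 2 / 2) • 1).IsHermitian := hS.isHermitian.sub h1.isHermitian
    rw [hH.posDef_iff_eigenvalues_pos]
    intro i
    have hv := hH.mulVec_eigenvectorBasis i
    have hv0 : (hH.eigenvectorBasis i).ofLp ≠ 0 := by
      intro h0
      exact hH.eigenvectorBasis.orthonormal.ne_zero i (by ext j; simpa using congrFun h0 j)
    generalize (hH.eigenvectorBasis i).ofLp = v at hv hv0
    generalize hH.eigenvalues i = l at hv
    have hSv : S.mulVec v = (l + σ ^ 2 / 2) • v := by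
      rw [Matrix.sub_mulVec, Matrix.smul_mulVec, Matrix.one_mulVec, sub_eq_iff_eq_add] at hv
      rw [hv, add_smul]
    have hYv : Y.mulVec v = (l * (l + σ ^ 2)) • v := by
      rw [← heq, Matrix.add_mulVec, Matrix.smul_mulVec, pow_two, ← Matrix.mulVec_mulVec, hv,
        Matrix.mulVec_smul, hv]
      module
    have a := hS.dotProduct_mulVec_nonneg v
    have b := hY.dotProduct_mulVec_pos hv0
    have c : 0 < star v ⬝ᵥ v := by simpa using Matrix.PosDef.one.dotProduct_mulVec_pos hv0
    rw [hSv, dotProduct_smul, smul_eq_mul] at a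
    rw [hYv, dotProduct_smul, smul_eq_mul] at b
    have a' := nonneg_of_mul_nonneg_left a c
    have b' := (mul_pos_iff_of_pos_right c).1 b
    by_contra hl
    push Not at hl
    nlinarith
  refine ⟨⟨_, ⟨hpd, heq⟩, ?_⟩, hpd, heq⟩
  rintro X ⟨hX, hXY⟩
  rw [eq_sub_iff_add_eq]
  apply psd_sq_inj (hX.posSemidef.add h1) hS
  rw [key, hXY, hS2]
end

section
/- Let P₀, P₁ be symmetric positive definite n×n matrices and σ a real number. Define Π₀ = I − P₀^{−1/2} ( (P₀^{1/2} P₁ P₀^{1/2} + (σ⁴/4) I)^{1/2} − (σ²/2) I ) P₀^{−1/2}, and for t ∈ ℝ define P_t = (I − Π₀ t) P₀ (I − Π₀ t) + σ² (t I − Π₀ t²). Then P_t equals P₀ at t = 0 and equals P₁ at t = 1. -/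
/-- With `P₀, P₁` symmetric positive definite, `σ` real,
`Q = P₀^{1/2}`, `S = (P₀^{1/2} P₁ P₀^{1/2} + (σ⁴/4)I)^{1/2}`,
`Π₀ = I − P₀^{−1/2}(S − (σ²/2)I)P₀^{−1/2}`, and
`P t = (I − tΠ₀) P₀ (I − tΠ₀) + σ²(t I − t² Π₀)`, the path `P` equals `P₀` at `t = 0`
and `P₁` at `t = 1`. -/
theorem stmt_2 (n : ℕ) (P₀ P₁ : Matrix (Fin n) (Fin n) ℝ) (σ : ℝ)
    (hP₀ : P₀.PosDef) (hP₁ : P₁.PosDef)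
    (Q : Matrix (Fin n) (Fin n) ℝ) (hQ : Q.PosDef) (hQ2 : Q ^ 2 = P₀)
    (S : Matrix (Fin n) (Fin n) ℝ) (hS : S.PosSemidef)
    (hS2 : S ^ 2 = Q * P₁ * Q + (σ ^ 4 / 4) • 1)
    (Pi0 : Matrix (Fin n) (Fin n) ℝ)
    (hPi0 : Pi0 = 1 - Q⁻¹ * (S - (σ ^ 2 / 2) • 1) * Q⁻¹)
    (P : ℝ → Matrix (Fin n) (Fin n) ℝ)
    (hP : ∀ t : ℝ, P t = (1 - t • Pi0) * P₀ * (1 - t • Pi0)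
      + σ ^ 2 • (t • (1 : Matrix (Fin n) (Fin n) ℝ) - t ^ 2 • Pi0)) :
    P 0 = P₀ ∧ P 1 = P₁ := by
  have hdet : IsUnit Q.det := (Matrix.isUnit_iff_isUnit_det Q).mp hQ.isUnit
  have h1 : Q⁻¹ * Q = 1 := Matrix.nonsing_inv_mul Q hdet
  have h2 : Q * Q⁻¹ = 1 := Matrix.mul_nonsing_inv Q hdet
  refine ⟨by rw [hP]; simp, ?_⟩
  generalize Q⁻¹ = R at *
  have hT : (S - (σ ^ 2 / 2) • 1) * (S - (σ ^ 2 / 2) • 1) + σ ^ 2 • (S - (σ ^ 2 / 2) • 1)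
      = Q * P₁ * Q := by
    rw [eq_sub_of_add_eq hS2.symm]
    simp only [sub_mul, mul_sub, smul_mul_assoc, mul_smul_comm, one_mul, mul_one, pow_two S]
    module
  generalize S - (σ ^ 2 / 2) • (1 : Matrix (Fin n) (Fin n) ℝ) = T at *
  have h3 : 1 - Pi0 = R * T * R := by rw [hPi0]; abel
  rw [hP]
  simp only [one_smul, one_pow, h3]
  rw [← hQ2]
  calc R * T * R * Q ^ 2 * (R * T * R) + σ ^ 2 • (R * T * R)
      = R * T * (R * Q) * (Q * R) * T * R + σ ^ 2 • (R * T * R) := by noncomm_ring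
    _ = R * (T * T + σ ^ 2 • T) * R := by
        rw [h1, h2]
        simp only [mul_add, add_mul, mul_one, mul_smul_comm, smul_mul_assoc, mul_assoc]
    _ = (R * Q) * P₁ * (Q * R) := by rw [hT]; noncomm_ring
    _ = P₁ := by rw [h1, h2]; simp
end

section
/- Let P₀ be a symmetric n×n matrix, σ a real number, and Π₀ a symmetric n×n matrix such that I − Π₀ t is invertible for all t in an open interval J containing [0,1]. Define P_t = (I − Π₀ t) P₀ (I − Π₀ t) + σ² (t I − Π₀ t²) and A_t = −Π₀ (I − Π₀ t)^{−1} for t ∈ J. Then for every t ∈ J the derivative of P_t satisfies the matrix differential equation dP_t/dt = A_t P_t + P_t A_tᵀ + σ² I. -/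
open Matrix

/-- Let `P₀` be symmetric, `σ` real, and `Π₀` symmetric such that
`I − tΠ₀` is invertible for all `t` in an open interval `J = (a,b)` containing `[0,1]`.
With `P t = (I − tΠ₀) P₀ (I − tΠ₀) + σ²(t I − t² Π₀)` and `A t = −Π₀ (I − tΠ₀)⁻¹`, the
(entrywise) derivative of `P` satisfies `dP/dt = A P + P Aᵀ + σ² I` on `J`. -/
theorem stmt_4 (n : ℕ) (P₀ Pi0 : Matrix (Fin n) (Fin n) ℝ) (σ a b : ℝ)
    (hP₀ : P₀.IsSymm) (hPi0 : Pi0.IsSymm)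
    (hJ : Set.Icc (0 : ℝ) 1 ⊆ Set.Ioo a b)
    (hinv : ∀ t ∈ Set.Ioo a b, IsUnit ((1 : Matrix (Fin n) (Fin n) ℝ) - t • Pi0))
    (P : ℝ → Matrix (Fin n) (Fin n) ℝ)
    (hP : ∀ t : ℝ, P t = (1 - t • Pi0) * P₀ * (1 - t • Pi0)
      + σ ^ 2 • (t • (1 : Matrix (Fin n) (Fin n) ℝ) - t ^ 2 • Pi0))
    (A : ℝ → Matrix (Fin n) (Fin n) ℝ)
    (hA : ∀ t : ℝ, A t = -(Pi0 * ((1 : Matrix (Fin n) (Fin n) ℝ) - t • Pi0)⁻¹)) :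
    ∀ t ∈ Set.Ioo a b, ∀ i j, HasDerivAt (fun s => P s i j)
      ((A t * P t + P t * (A t)ᵀ + σ ^ 2 • 1) i j) t := by
  intro t ht i j
  have hu := (Matrix.isUnit_iff_isUnit_det _).1 (hinv t ht)
  have hMi : ((1 : Matrix (Fin n) (Fin n) ℝ) - t • Pi0)⁻¹ * (1 - t • Pi0) = 1 :=
    Matrix.nonsing_inv_mul _ hu
  have hMi2 : ((1 : Matrix (Fin n) (Fin n) ℝ) - t • Pi0) * (1 - t • Pi0)⁻¹ = 1 :=
    Matrix.mul_nonsing_inv _ hu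
  have hPt : P t = (1 - t • Pi0) * (P₀ * (1 - t • Pi0) + (σ ^ 2 * t) • 1) := by
    rw [hP t]
    simp only [mul_add, mul_sub, sub_mul, mul_one, one_mul, smul_mul_assoc, mul_smul_comm,
      smul_sub, smul_smul, Matrix.mul_assoc]
    module
  have hPt2 : P t = ((1 - t • Pi0) * P₀ + (σ ^ 2 * t) • 1) * (1 - t • Pi0) := by
    rw [hP t]
    simp only [add_mul, mul_sub, sub_mul, mul_one, one_mul, smul_mul_assoc, mul_smul_comm,
      smul_sub, smul_smul, Matrix.mul_assoc]
    module
  have hAT : (A t)ᵀ = -((1 - t • Pi0)⁻¹ * Pi0) := by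
    rw [hA t, Matrix.transpose_neg, Matrix.transpose_mul, Matrix.transpose_nonsing_inv,
      Matrix.transpose_sub, Matrix.transpose_smul, Matrix.transpose_one, hPi0.eq]
  have h1 : A t * P t = -(Pi0 * (P₀ * (1 - t • Pi0) + (σ ^ 2 * t) • 1)) := by
    rw [hA t, hPt, neg_mul, Matrix.mul_assoc, ← Matrix.mul_assoc _⁻¹, hMi, Matrix.one_mul]
  have h2 : P t * (A t)ᵀ = -(((1 - t • Pi0) * P₀ + (σ ^ 2 * t) • 1) * Pi0) := by
    rw [hAT, hPt2, mul_neg, Matrix.mul_assoc, ← Matrix.mul_assoc _ _⁻¹, hMi2, Matrix.one_mul]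
  have hD : A t * P t + P t * (A t)ᵀ + σ ^ 2 • 1 = -(Pi0 * P₀ + P₀ * Pi0)
      + (2 * t) • (Pi0 * P₀ * Pi0) + σ ^ 2 • (1 - (2 * t) • Pi0) := by
    rw [h1, h2]
    simp only [mul_add, add_mul, mul_sub, sub_mul, mul_one, one_mul, smul_mul_assoc,
      mul_smul_comm, smul_sub, smul_smul, Matrix.mul_assoc]
    module
  have hPs : ∀ s, P s = P₀ - s • (Pi0 * P₀ + P₀ * Pi0) + s ^ 2 • (Pi0 * P₀ * Pi0)
      + σ ^ 2 • (s • (1 : Matrix (Fin n) (Fin n) ℝ) - s ^ 2 • Pi0) := by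
    intro s
    rw [hP s]
    simp only [mul_sub, sub_mul, mul_one, one_mul, smul_mul_assoc,
      mul_smul_comm, smul_sub, smul_smul, Matrix.mul_assoc]
    module
  rw [hD]
  simp only [hPs, Matrix.add_apply, Matrix.sub_apply, Matrix.smul_apply, Matrix.neg_apply,
    smul_eq_mul]
  have e1 := hasDerivAt_id' t
  have e2 : HasDerivAt (fun s : ℝ => s ^ 2) (2 * t) t := by
    simpa using hasDerivAt_pow 2 t
  have e3 := (((e1.mul_const ((Pi0 * P₀) i j + (P₀ * Pi0) i j)).const_sub (P₀ i j)).add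
    (e2.mul_const ((Pi0 * P₀ * Pi0) i j))).add
    (((e1.mul_const ((1 : Matrix (Fin n) (Fin n) ℝ) i j)).sub
      (e2.mul_const (Pi0 i j))).const_mul (σ ^ 2))
  simp only [one_mul, zero_sub] at e3
  exact e3
end

section
/- Let σ be a real number and let J be an open interval. Suppose P_t and Π_t are differentiable n×n-matrix-valued functions on J with P_t invertible for all t ∈ J, satisfying dP_t/dt = −2 P_t Π_t P_t + σ² I and dΠ_t/dt = 2 Π_t P_t Π_t on J. Then P_t is twice differentiable on J and satisfies the second-order matrix differential equation d²P_t/dt² − (dP_t/dt) P_t^{−1} (dP_t/dt) + σ⁴ P_t^{−1} = 0 for all t ∈ J. -/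
open Matrix

/-- Entrywise product rule for matrix-valued functions. -/
lemma entry_mul {n : ℕ} {A B : ℝ → Matrix (Fin n) (Fin n) ℝ} {A' B' : Matrix (Fin n) (Fin n) ℝ}
    {t : ℝ} (hA : ∀ i j, HasDerivAt (fun s => A s i j) (A' i j) t)
    (hB : ∀ i j, HasDerivAt (fun s => B s i j) (B' i j) t) (i j : Fin n) :
    HasDerivAt (fun s => (A s * B s) i j) ((A' * B t + A t * B') i j) t := by
  simp only [Matrix.mul_apply, Matrix.add_apply, ← Finset.sum_add_distrib]
  exact HasDerivAt.fun_sum fun k _ => (hA i k).fun_mul (hB k j)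

/-- Let `σ` be real and `J = (a,b)` an open interval.  Suppose `P` and `Π`
are differentiable matrix-valued functions on `J` with `P t` invertible, satisfying
`dP/dt = −2 P Π P + σ² I` and `dΠ/dt = 2 Π P Π` on `J` (entrywise derivatives).  Then `P` is
twice differentiable on `J` and satisfies `d²P/dt² − (dP/dt) P⁻¹ (dP/dt) + σ⁴ P⁻¹ = 0`,
i.e. the function `s ↦ −2 P Π P + σ² I` (which is `dP/dt`) has entrywise derivative
`(dP/dt) P⁻¹ (dP/dt) − σ⁴ P⁻¹` on `J`. -/
theorem stmt_6 (n : ℕ) (σ a b : ℝ)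
    (P Q : ℝ → Matrix (Fin n) (Fin n) ℝ)
    (hPinv : ∀ t ∈ Set.Ioo a b, IsUnit (P t))
    (hP : ∀ t ∈ Set.Ioo a b, ∀ i j, HasDerivAt (fun s => P s i j)
      (((-2 : ℝ) • (P t * Q t * P t) + σ ^ 2 • 1) i j) t)
    (hQ : ∀ t ∈ Set.Ioo a b, ∀ i j, HasDerivAt (fun s => Q s i j)
      (((2 : ℝ) • (Q t * P t * Q t)) i j) t) :
    ∀ t ∈ Set.Ioo a b, ∀ i j,
      HasDerivAt
        (fun s => ((-2 : ℝ) • (P s * Q s * P s) + σ ^ 2 • (1 : Matrix (Fin n) (Fin n) ℝ)) i j)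
        ((((-2 : ℝ) • (P t * Q t * P t) + σ ^ 2 • 1) * (P t)⁻¹
            * ((-2 : ℝ) • (P t * Q t * P t) + σ ^ 2 • 1)
          - σ ^ 4 • (P t)⁻¹) i j) t := by
  intro t ht i j
  have h := entry_mul (entry_mul (hP t ht) (hQ t ht)) (hP t ht) i j
  have h2 := (h.const_mul (-2 : ℝ)).add_const ((σ ^ 2 • (1 : Matrix (Fin n) (Fin n) ℝ)) i j)
  have hd : IsUnit (P t).det := (Matrix.isUnit_iff_isUnit_det _).1 (hPinv t ht)
  refine h2.congr_deriv ?_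
  rw [← smul_eq_mul, ← Matrix.smul_apply]
  refine congrFun (congrFun (?_ : (_ : Matrix (Fin n) (Fin n) ℝ) = _) i) j
  have e1 : P t * (P t)⁻¹ = 1 := Matrix.mul_nonsing_inv _ hd
  have e2 : (P t)⁻¹ * P t = 1 := Matrix.nonsing_inv_mul _ hd
  have e3 : ∀ X, (P t)⁻¹ * (P t * X) = X := fun X => by rw [← mul_assoc, e2, one_mul]
  simp only [add_mul, mul_add, smul_mul_assoc, mul_smul_comm, mul_assoc, one_mul, mul_one,
    e1, e2, e3, smul_add, smul_smul]
  module
end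

section
/- Let σ be a real number and let a, b be nonzero real numbers. Then the function p(t) = a·e^{bt} − (σ⁴/(4ab²))·e^{−bt} satisfies the scalar differential equation p(t)·p''(t) − (p'(t))² + σ⁴ = 0 for all t ∈ ℝ. -/
theorem deriv_exp_comb (A C b : ℝ) :
    deriv (fun t : ℝ => A * Real.exp (b * t) - C * Real.exp (-(b * t)))
      = fun t : ℝ => (A * b) * Real.exp (b * t) - (-(C * b)) * Real.exp (-(b * t)) := by
  funext t
  have h0 : HasDerivAt (fun t : ℝ => b * t) b t := by
    simpa using (hasDerivAt_id t).const_mul b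
  have h := (h0.exp.const_mul A).sub (h0.fun_neg.exp.const_mul C)
  refine (h.deriv).trans ?_
  ring

/-- For `σ` real and `a, b` nonzero reals, the function
`p t = a e^{bt} − (σ⁴/(4ab²)) e^{−bt}` satisfies `p p'' − (p')² + σ⁴ = 0` on `ℝ`. -/
theorem stmt_8 (σ a b : ℝ) (ha : a ≠ 0) (hb : b ≠ 0)
    (p : ℝ → ℝ)
    (hp : ∀ t : ℝ, p t = a * Real.exp (b * t)
      - σ ^ 4 / (4 * a * b ^ 2) * Real.exp (-(b * t))) :
    ∀ t : ℝ, p t * deriv (deriv p) t - (deriv p t) ^ 2 + σ ^ 4 = 0 := by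
  intro t
  obtain rfl : p = fun t : ℝ => a * Real.exp (b * t)
      - σ ^ 4 / (4 * a * b ^ 2) * Real.exp (-(b * t)) := funext hp
  rw [deriv_exp_comb, deriv_exp_comb]
  have hE : Real.exp (b * t) * Real.exp (-(b * t)) = 1 := by
    rw [← Real.exp_add]; simp
  have hc : 4 * a * b ^ 2 * (σ ^ 4 / (4 * a * b ^ 2)) = σ ^ 4 := by
    field_simp
  generalize σ ^ 4 / (4 * a * b ^ 2) = c at *
  linear_combination (-(4 * a * b ^ 2 * c)) * hE - hc
end

section
/- Let p₀, p₁, σ be positive real numbers with |p₁ − p₀| > σ². Then there exists a unique b > 0 satisfying 4(p₁ − p₀e^{−b})(p₁ − p₀e^{b})·b² − σ⁴(e^{b} − e^{−b})² = 0. -/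
lemma aux_sinh_le {x : ℝ} (hx : 0 ≤ x) : Real.sinh x ≤ x * Real.cosh x := by
  have hm : MonotoneOn (fun t : ℝ => t * Real.cosh t - Real.sinh t) (Set.Ici 0) := by
    apply monotoneOn_of_deriv_nonneg (convex_Ici 0)
    · exact Continuous.continuousOn
        ((continuous_id.mul Real.continuous_cosh).sub Real.continuous_sinh)
    · exact Differentiable.differentiableOn
        ((differentiable_id.mul Real.differentiable_cosh).sub Real.differentiable_sinh)
    · intro t ht
      rw [interior_Ici] at ht
      have ht' : 0 < t := ht
      have hd : HasDerivAt (fun t : ℝ => t * Real.cosh t - Real.sinh t)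
          (1 * Real.cosh t + t * Real.sinh t - Real.cosh t) t :=
        ((hasDerivAt_id t).mul (Real.hasDerivAt_cosh t)).sub (Real.hasDerivAt_sinh t)
      rw [hd.deriv]
      have := mul_pos ht' (Real.sinh_pos_iff.2 ht')
      linarith
  have := hm (Set.mem_Ici.2 le_rfl) (Set.mem_Ici.2 hx) hx
  simp at this
  linarith

lemma aux_sinh_mono {x y : ℝ} (hx : 0 < x) (hxy : x ≤ y) :
    y * Real.sinh x ≤ x * Real.sinh y := by
  have hm : MonotoneOn (fun t : ℝ => x * Real.sinh t - t * Real.sinh x) (Set.Ici x) := by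
    apply monotoneOn_of_deriv_nonneg (convex_Ici x)
    · exact Continuous.continuousOn
        ((continuous_const.mul Real.continuous_sinh).sub (continuous_id.mul continuous_const))
    · exact Differentiable.differentiableOn
        ((Real.differentiable_sinh.const_mul x).sub (differentiable_id.mul_const _))
    · intro t ht
      rw [interior_Ici] at ht
      have ht' : x < t := ht
      have hd : HasDerivAt (fun t : ℝ => x * Real.sinh t - t * Real.sinh x)
          (x * Real.cosh t - 1 * Real.sinh x) t :=
        ((Real.hasDerivAt_sinh t).const_mul x).sub ((hasDerivAt_id t).mul_const _)
      rw [hd.deriv]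
      have h1 := aux_sinh_le hx.le
      have h2 : Real.cosh x ≤ Real.cosh t :=
        Real.cosh_le_cosh.2 (by rw [abs_of_pos hx, abs_of_pos (hx.trans ht')]; exact ht'.le)
      nlinarith
  have := hm (Set.mem_Ici.2 le_rfl) (Set.mem_Ici.2 hxy) hxy
  simp only at this
  linarith

lemma aux_lt (A c s x y : ℝ) (hc : 0 < c) (hx : 0 < x) (hxy : x < y)
    (ex : (A - c * (Real.cosh x - 1)) * x ^ 2 - s ^ 2 * Real.sinh x ^ 2 = 0)
    (ey : (A - c * (Real.cosh y - 1)) * y ^ 2 - s ^ 2 * Real.sinh y ^ 2 = 0) : False := by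
  have hy := hx.trans hxy
  have h1 := aux_sinh_mono hx hxy.le
  have h2 : Real.cosh x < Real.cosh y :=
    Real.cosh_lt_cosh.2 (by rw [abs_of_pos hx, abs_of_pos hy]; exact hxy)
  have h3 : (y * Real.sinh x) ^ 2 ≤ (x * Real.sinh y) ^ 2 :=
    pow_le_pow_left₀ (mul_pos hy (Real.sinh_pos_iff.2 hx)).le h1 2
  have h4 := mul_le_mul_of_nonneg_left h3 (sq_nonneg s)
  have h5 : 0 < c * (Real.cosh y - Real.cosh x) * (x ^ 2 * y ^ 2) :=
    mul_pos (mul_pos hc (by linarith)) (by positivity)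
  have e1 : y ^ 2 * ((A - c * (Real.cosh x - 1)) * x ^ 2 - s ^ 2 * Real.sinh x ^ 2) = 0 := by
    rw [ex, mul_zero]
  have e2 : x ^ 2 * ((A - c * (Real.cosh y - 1)) * y ^ 2 - s ^ 2 * Real.sinh y ^ 2) = 0 := by
    rw [ey, mul_zero]
  nlinarith

lemma aux_exists (A c s : ℝ) (hc : 0 < c) (hs : 0 < s) (hA : s ^ 2 < A) :
    ∃ b : ℝ, 0 < b ∧
      (A - c * (Real.cosh b - 1)) * b ^ 2 - s ^ 2 * Real.sinh b ^ 2 = 0 := by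
  have hcont : Continuous (fun b : ℝ => A - c * (Real.cosh b - 1) - s ^ 2 * Real.cosh b ^ 2) := by
    have := Real.continuous_cosh
    fun_prop
  have hev : ∀ᶠ b in nhds (0:ℝ), 0 < A - c * (Real.cosh b - 1) - s ^ 2 * Real.cosh b ^ 2 := by
    apply hcont.continuousAt.eventually (lt_mem_nhds _)
    simp
    linarith
  obtain ⟨e, he, hball⟩ := Metric.eventually_nhds_iff.1 hev
  obtain ⟨d, hd0, hd⟩ := exists_between (lt_min he one_pos)
  have hde : d < e := hd.trans_le (min_le_left _ _)
  have hd1 : d < 1 := hd.trans_le (min_le_right _ _)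
  have hpos := hball (y := d) (by rw [Real.dist_eq, sub_zero, abs_of_pos hd0]; exact hde)
  have hA0 : 0 < A := lt_trans (by positivity) hA
  set B := 1 + A / c with hB
  have hAc : 0 < A / c := div_pos hA0 hc
  have hB1 : 1 ≤ B := by linarith
  have hcB : c * (B - 1) = A := by rw [hB]; field_simp; ring
  have hcosh : B < Real.cosh B :=
    lt_of_le_of_lt (Real.self_le_sinh_iff.2 (by linarith)) (Real.sinh_lt_cosh B)
  have hcont2 : Continuous (fun b : ℝ =>
      (A - c * (Real.cosh b - 1)) * b ^ 2 - s ^ 2 * Real.sinh b ^ 2) := by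
    have := Real.continuous_cosh
    have := Real.continuous_sinh
    fun_prop
  have hdB : d ≤ B := by linarith
  have hmem := intermediate_value_Icc' hdB hcont2.continuousOn
  have hz : (0:ℝ) ∈ Set.Icc ((A - c * (Real.cosh B - 1)) * B ^ 2 - s ^ 2 * Real.sinh B ^ 2)
      ((A - c * (Real.cosh d - 1)) * d ^ 2 - s ^ 2 * Real.sinh d ^ 2) := by
    constructor
    · have h1 : A - c * (Real.cosh B - 1) ≤ 0 := by nlinarith
      have h2 := mul_nonneg (neg_nonneg.2 h1) (sq_nonneg B)
      have h3 : 0 ≤ s ^ 2 * Real.sinh B ^ 2 := by positivity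
      linarith
    · have h1 := pow_le_pow_left₀ (Real.sinh_pos_iff.2 hd0).le (aux_sinh_le hd0.le) 2
      have h2 := mul_le_mul_of_nonneg_left h1 (sq_nonneg s)
      have h3 := mul_pos hpos (pow_pos hd0 2)
      nlinarith
  obtain ⟨b, hb, hb0⟩ := hmem hz
  exact ⟨b, hd0.trans_le hb.1, hb0⟩

lemma aux_eq (p₀ p₁ σ b : ℝ) :
    4 * (p₁ - p₀ * Real.exp (-b)) * (p₁ - p₀ * Real.exp b) * b ^ 2
        - σ ^ 4 * (Real.exp b - Real.exp (-b)) ^ 2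
    = 4 * (((p₁ - p₀) ^ 2 - 2 * p₀ * p₁ * (Real.cosh b - 1)) * b ^ 2
        - (σ ^ 2) ^ 2 * Real.sinh b ^ 2) := by
  have h : Real.exp b * Real.exp (-b) = 1 := by rw [← Real.exp_add]; simp
  rw [Real.cosh_eq, Real.sinh_eq]
  linear_combination (4 * p₀ ^ 2 * b ^ 2) * h

/-- Let `p₀, p₁, σ` be positive reals with `|p₁ − p₀| > σ²`.  Then there
exists a unique `b > 0` with `4(p₁ − p₀e^{−b})(p₁ − p₀e^{b}) b² − σ⁴(e^{b} − e^{−b})² = 0`. -/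
theorem stmt_11 (p₀ p₁ σ : ℝ) (h0 : 0 < p₀) (h1 : 0 < p₁) (hσ : 0 < σ)
    (h : σ ^ 2 < |p₁ - p₀|) :
    ∃! b : ℝ, 0 < b ∧
      4 * (p₁ - p₀ * Real.exp (-b)) * (p₁ - p₀ * Real.exp b) * b ^ 2
        - σ ^ 4 * (Real.exp b - Real.exp (-b)) ^ 2 = 0 := by
  have hc : 0 < 2 * p₀ * p₁ := by positivity
  have hA : (σ ^ 2) ^ 2 < (p₁ - p₀) ^ 2 := by
    rw [← sq_abs (p₁ - p₀)]
    exact pow_lt_pow_left₀ h (by positivity) two_ne_zero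
  obtain ⟨b, hb, he⟩ := aux_exists _ _ (σ ^ 2) hc (by positivity) hA
  refine ⟨b, ⟨hb, by rw [aux_eq, he, mul_zero]⟩, ?_⟩
  rintro y ⟨hy, hey⟩
  rw [aux_eq] at hey
  have hey' := (mul_eq_zero.1 hey).resolve_left (by norm_num)
  rcases lt_trichotomy y b with hlt | heq | hgt
  · exact (aux_lt _ _ _ _ _ hc hy hlt hey' he).elim
  · exact heq
  · exact (aux_lt _ _ _ _ _ hc hb hgt he hey').elim
end

section
/- Let p₀, p₁, σ be positive real numbers with |p₁ − p₀| < σ². Then there exists a unique ω ∈ (0, π) satisfying (σ⁴/ω²)·sin²(ω) + 2p₀p₁·cos(ω) = p₀² + p₁². -/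
lemma aux_sinc {x y : ℝ} (hx : 0 < x) (hxy : x < y) (hy : y ≤ Real.pi) :
    Real.sin y / y < Real.sin x / x := by
  have hy0 : 0 < y := hx.trans hxy
  have ha : 0 < 1 - x / y := by rw [sub_pos, div_lt_one hy0]; exact hxy
  have hb : 0 < x / y := by positivity
  have m0 : (0 : ℝ) ∈ Set.Icc 0 Real.pi := ⟨le_rfl, Real.pi_pos.le⟩
  have my : y ∈ Set.Icc 0 Real.pi := ⟨hy0.le, hy⟩
  have hc := strictConcaveOn_sin_Icc.2 m0 my hy0.ne ha hb (by ring)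
  simp only [smul_eq_mul, Real.sin_zero, mul_zero, zero_add] at hc
  rw [div_mul_cancel₀ _ hy0.ne'] at hc
  rw [lt_div_iff₀ hx]
  calc Real.sin y / y * x = x / y * Real.sin y := by ring
    _ < _ := hc

/-- Let `p₀, p₁, σ` be positive reals with `|p₁ − p₀| < σ²`.  Then there
exists a unique `ω ∈ (0, π)` with `(σ⁴/ω²) sin²ω + 2p₀p₁ cos ω = p₀² + p₁²`. -/
theorem stmt_12 (p₀ p₁ σ : ℝ) (h0 : 0 < p₀) (h1 : 0 < p₁) (hσ : 0 < σ)
    (h : |p₁ - p₀| < σ ^ 2) :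
    ∃! ω : ℝ, ω ∈ Set.Ioo 0 Real.pi ∧
      σ ^ 4 / ω ^ 2 * Real.sin ω ^ 2 + 2 * p₀ * p₁ * Real.cos ω = p₀ ^ 2 + p₁ ^ 2 := by
  have key : ∀ x y : ℝ, 0 < x → x < y → y < Real.pi →
      σ ^ 4 / y ^ 2 * Real.sin y ^ 2 + 2 * p₀ * p₁ * Real.cos y <
      σ ^ 4 / x ^ 2 * Real.sin x ^ 2 + 2 * p₀ * p₁ * Real.cos x := by
    intro x y hx hxy hy
    have hs := aux_sinc hx hxy hy.le
    have hy0 : 0 < y := hx.trans hxy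
    have hsy : 0 ≤ Real.sin y / y :=
      div_nonneg (Real.sin_nonneg_of_nonneg_of_le_pi hy0.le hy.le) hy0.le
    have hsq : (Real.sin y / y) ^ 2 < (Real.sin x / x) ^ 2 :=
      pow_lt_pow_left₀ hs hsy two_ne_zero
    have hc := Real.cos_lt_cos_of_nonneg_of_le_pi hx.le hy.le hxy
    have e1 := mul_lt_mul_of_pos_left hsq (pow_pos hσ 4)
    have e2 := mul_lt_mul_of_pos_left hc (by positivity : 0 < 2 * p₀ * p₁)
    have r : ∀ z : ℝ, σ ^ 4 / z ^ 2 * Real.sin z ^ 2 = σ ^ 4 * (Real.sin z / z) ^ 2 := by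
      intro z; rw [div_pow]; ring
    rw [r, r]; linarith
  have hsq : (p₁ - p₀) ^ 2 < σ ^ 4 := by
    have := pow_lt_pow_left₀ h (abs_nonneg _) two_ne_zero
    rw [sq_abs] at this
    calc _ < _ := this
      _ = _ := by ring
  have hcont : ContinuousOn
      (fun z => σ ^ 4 * Real.sinc z ^ 2 + 2 * p₀ * p₁ * Real.cos z) (Set.Icc 0 Real.pi) := by
    have := Real.continuous_sinc
    fun_prop
  have hivt := intermediate_value_Ioo' Real.pi_pos.le hcont
  have hmem : p₀ ^ 2 + p₁ ^ 2 ∈ Set.Ioo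
      (σ ^ 4 * Real.sinc Real.pi ^ 2 + 2 * p₀ * p₁ * Real.cos Real.pi)
      (σ ^ 4 * Real.sinc 0 ^ 2 + 2 * p₀ * p₁ * Real.cos 0) := by
    have hp : Real.sinc Real.pi = 0 := by
      rw [Real.sinc_of_ne_zero Real.pi_ne_zero]; simp
    rw [hp, Real.sinc_zero, Real.cos_pi, Real.cos_zero]
    constructor
    · have := mul_pos h0 h1
      nlinarith [sq_nonneg p₀, sq_nonneg p₁]
    · nlinarith
  obtain ⟨w, hw, hwe⟩ := hivt hmem
  have hwe' : σ ^ 4 / w ^ 2 * Real.sin w ^ 2 + 2 * p₀ * p₁ * Real.cos w = p₀ ^ 2 + p₁ ^ 2 := by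
    rw [← hwe]
    simp only [Real.sinc_of_ne_zero hw.1.ne']
    rw [div_pow]; ring
  refine ⟨w, ⟨hw, hwe'⟩, ?_⟩
  rintro v ⟨hv, hve⟩
  rcases lt_trichotomy v w with hlt | heq | hgt
  · have := key v w hv.1 hlt hw.2
    linarith
  · exact heq
  · have := key w v hw.1 hgt hv.2
    linarith
end

section
/- Let p₀, p₁, σ be positive real numbers and define φ(b) = 4(p₁ − p₀e^{−b})(p₁ − p₀e^{b})·b² − σ⁴(e^{b} − e^{−b})². Then φ(0) = 0, φ'(0) = 0, φ''(0) = 8((p₁ − p₀)² − σ⁴), and the second derivative φ'' is strictly decreasing on (0, ∞). -/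
/-- Let `p₀, p₁, σ` be positive reals and
`φ b = 4(p₁ − p₀e^{−b})(p₁ − p₀e^{b}) b² − σ⁴(e^{b} − e^{−b})²`.  Then `φ 0 = 0`,
`φ' 0 = 0`, `φ'' 0 = 8((p₁ − p₀)² − σ⁴)`, and `φ''` is strictly decreasing on `(0, ∞)`. -/
theorem stmt_13 (p₀ p₁ σ : ℝ) (h0 : 0 < p₀) (h1 : 0 < p₁) (hσ : 0 < σ)
    (φ : ℝ → ℝ)
    (hφ : ∀ x : ℝ, φ x = 4 * (p₁ - p₀ * Real.exp (-x)) * (p₁ - p₀ * Real.exp x) * x ^ 2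
      - σ ^ 4 * (Real.exp x - Real.exp (-x)) ^ 2) :
    φ 0 = 0 ∧ deriv φ 0 = 0 ∧
    deriv (deriv φ) 0 = 8 * ((p₁ - p₀) ^ 2 - σ ^ 4) ∧
    StrictAntiOn (deriv (deriv φ)) (Set.Ioi 0) := by
  have e0 : φ = fun x => 4 * (p₁ ^ 2 + p₀ ^ 2) * x ^ 2 - 8 * (p₀ * p₁) * (Real.cosh x * x ^ 2)
      - 4 * σ ^ 4 * Real.sinh x ^ 2 := by
    funext x
    have he : Real.exp (-x) * Real.exp x = 1 := by rw [← Real.exp_add]; simp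
    rw [hφ, Real.cosh_eq, Real.sinh_eq]
    linear_combination (4 * p₀ ^ 2 * x ^ 2) * he
  have e1 : deriv φ = fun x => 4 * (p₁ ^ 2 + p₀ ^ 2) * (2 * x)
      - 8 * (p₀ * p₁) * (Real.sinh x * x ^ 2 + Real.cosh x * (2 * x))
      - 4 * σ ^ 4 * (2 * (Real.sinh x * Real.cosh x)) := by
    funext x
    rw [e0]
    have hx : HasDerivAt (fun x : ℝ => x ^ 2) (2 * x) x := by simpa using hasDerivAt_pow 2 x
    have hs : HasDerivAt (fun x : ℝ => Real.sinh x ^ 2) (2 * (Real.sinh x * Real.cosh x)) x := by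
      simpa [mul_assoc] using (Real.hasDerivAt_sinh x).fun_pow 2
    exact (((hx.const_mul _).sub (((Real.hasDerivAt_cosh x).mul hx).const_mul _)).sub
      (hs.const_mul _)).deriv
  have e2 : deriv (deriv φ) = fun x => 4 * (p₁ ^ 2 + p₀ ^ 2) * (2 * 1)
      - 8 * (p₀ * p₁) * ((Real.cosh x * x ^ 2 + Real.sinh x * (2 * x))
        + (Real.sinh x * (2 * x) + Real.cosh x * (2 * 1)))
      - 4 * σ ^ 4 * (2 * (Real.cosh x * Real.cosh x + Real.sinh x * Real.sinh x)) := by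
    funext x
    rw [e1]
    have hx : HasDerivAt (fun x : ℝ => x ^ 2) (2 * x) x := by simpa using hasDerivAt_pow 2 x
    have hl : HasDerivAt (fun x : ℝ => 2 * x) (2 * 1) x := (hasDerivAt_id x).const_mul 2
    have hs := Real.hasDerivAt_sinh x
    have hc := Real.hasDerivAt_cosh x
    exact (((hl.const_mul _).sub (((hs.mul hx).add (hc.mul hl)).const_mul _)).sub
      (((hs.mul hc).const_mul 2).const_mul _)).deriv
  refine ⟨by rw [e0]; simp, by rw [e1]; simp, by rw [e2]; simp; ring, ?_⟩
  rw [e2]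
  intro x hx y hy hxy
  have hx0 : 0 < x := hx
  have hy0 : 0 < y := hy
  have hs : Real.sinh x < Real.sinh y := Real.sinh_lt_sinh.2 hxy
  have hsx : 0 < Real.sinh x := Real.sinh_pos_iff.2 hx0
  have hc : Real.cosh x < Real.cosh y := by
    rw [Real.cosh_lt_cosh, abs_of_pos hx0, abs_of_pos hy0]; exact hxy
  have hcx : 0 < Real.cosh x := Real.cosh_pos x
  have hp : 0 < p₀ * p₁ := by positivity
  have hq : 0 < σ ^ 4 := by positivity
  dsimp only
  have a1 : Real.cosh x * x ^ 2 + Real.sinh x * (2 * x)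
        + (Real.sinh x * (2 * x) + Real.cosh x * (2 * 1)) <
      Real.cosh y * y ^ 2 + Real.sinh y * (2 * y)
        + (Real.sinh y * (2 * y) + Real.cosh y * (2 * 1)) := by gcongr
  have a2 : Real.cosh x * Real.cosh x + Real.sinh x * Real.sinh x <
      Real.cosh y * Real.cosh y + Real.sinh y * Real.sinh y := by gcongr
  have b1 := mul_lt_mul_of_pos_left a1 hp
  have b2 := mul_lt_mul_of_pos_left a2 hq
  linarith
end

section
/- Let p₀, p₁, σ be positive real numbers and define ψ(ω) = (σ⁴/ω²)·sin²(ω) + 2p₀p₁·cos(ω) for ω ∈ (0, π). Then ψ is strictly decreasing on (0, π), the limit of ψ(ω) as ω → 0⁺ equals σ⁴ + 2p₀p₁, and ψ(π) = −2p₀p₁ < 0. -/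
/-- Let `p₀, p₁, σ` be positive reals and
`ψ ω = (σ⁴/ω²) sin²ω + 2p₀p₁ cos ω` on `(0, π)`.  Then `ψ` is strictly decreasing on
`(0, π)`, `ψ ω → σ⁴ + 2p₀p₁` as `ω → 0⁺`, and `ψ π = −2p₀p₁ < 0`. -/
theorem stmt_14 (p₀ p₁ σ : ℝ) (h0 : 0 < p₀) (h1 : 0 < p₁) (hσ : 0 < σ)
    (ψ : ℝ → ℝ)
    (hψ : ∀ ω : ℝ, ψ ω = σ ^ 4 / ω ^ 2 * Real.sin ω ^ 2 + 2 * p₀ * p₁ * Real.cos ω) :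
    StrictAntiOn ψ (Set.Ioo 0 Real.pi) ∧
    Filter.Tendsto ψ (nhdsWithin 0 (Set.Ioi 0)) (nhds (σ ^ 4 + 2 * p₀ * p₁)) ∧
    ψ Real.pi = -(2 * p₀ * p₁) ∧ -(2 * p₀ * p₁) < 0 := by
  refine ⟨?_, ?_, ?_, ?_⟩
  · intro a ha b hb hab
    obtain ⟨ha0, haπ⟩ := ha
    obtain ⟨hb0, hbπ⟩ := hb
    have hcos : Real.cos b < Real.cos a :=
      Real.cos_lt_cos_of_nonneg_of_le_pi ha0.le hbπ.le hab
    have hsb : 0 < Real.sin b := Real.sin_pos_of_pos_of_lt_pi hb0 hbπ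
    have hconc := strictConcaveOn_sin_Icc.2
      (show (0 : ℝ) ∈ Set.Icc 0 Real.pi from ⟨le_rfl, Real.pi_pos.le⟩)
      (show b ∈ Set.Icc 0 Real.pi from ⟨hb0.le, hbπ.le⟩) hb0.ne
      (show 0 < 1 - a / b by rw [sub_pos, div_lt_one hb0]; exact hab)
      (div_pos ha0 hb0) (by ring)
    have e : a / b * b = a := div_mul_cancel₀ a hb0.ne'
    simp only [smul_eq_mul, mul_zero, zero_add, Real.sin_zero, e] at hconc
    have hlt : Real.sin b / b < Real.sin a / a := by
      rw [lt_div_iff₀ ha0]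
      calc Real.sin b / b * a = a / b * Real.sin b := by ring
        _ < Real.sin a := hconc
    have hsq : (Real.sin b / b) ^ 2 < (Real.sin a / a) ^ 2 :=
      pow_lt_pow_left₀ hlt (div_pos hsb hb0).le two_ne_zero
    have e1 : ∀ x : ℝ, σ ^ 4 / x ^ 2 * Real.sin x ^ 2 = σ ^ 4 * (Real.sin x / x) ^ 2 := by
      intro x
      ring
    rw [hψ a, hψ b, e1 a, e1 b]
    exact add_lt_add (mul_lt_mul_of_pos_left hsq (by positivity))
      (mul_lt_mul_of_pos_left hcos (by positivity))
  · have hc : Continuous fun x : ℝ => σ ^ 4 * Real.sinc x ^ 2 + 2 * p₀ * p₁ * Real.cos x :=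
      ((Real.continuous_sinc.pow 2).const_mul _).add (Real.continuous_cos.const_mul _)
    have ht := (hc.tendsto 0).mono_left (nhdsWithin_le_nhds (s := Set.Ioi 0))
    simp only [Real.sinc_zero, Real.cos_zero, one_pow, mul_one] at ht
    refine ht.congr' ?_
    filter_upwards [self_mem_nhdsWithin] with x hx
    rw [hψ x, Real.sinc_of_ne_zero (ne_of_gt hx)]
    ring
  · rw [hψ]
    simp
  · have : 0 < 2 * p₀ * p₁ := by positivity
    linarith
end

section
/- Let p₀, p₁, σ be positive real numbers and let b be a nonzero real number satisfying 4(p₁ − p₀e^{−b})(p₁ − p₀e^{b})·b² = σ⁴(e^{b} − e^{−b})². Define p(t) = ((p₁ − p₀e^{−b})/(e^{b} − e^{−b}))·e^{bt} + ((p₁ − p₀e^{b})/(e^{−b} − e^{b}))·e^{−bt}. Then p(0) = p₀, p(1) = p₁, and p satisfies the differential equation p(t)·p''(t) − (p'(t))² + σ⁴ = 0 for all t ∈ ℝ. -/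
/-- Let `p₀, p₁, σ` be positive reals and `b ≠ 0` with
`4(p₁ − p₀e^{−b})(p₁ − p₀e^{b}) b² = σ⁴(e^{b} − e^{−b})²`.  Then
`p t = ((p₁ − p₀e^{−b})/(e^{b} − e^{−b})) e^{bt} + ((p₁ − p₀e^{b})/(e^{−b} − e^{b})) e^{−bt}`
satisfies `p 0 = p₀`, `p 1 = p₁`, and `p p'' − (p')² + σ⁴ = 0` on `ℝ`. -/
theorem stmt_15 (p₀ p₁ σ b : ℝ) (h0 : 0 < p₀) (h1 : 0 < p₁) (hσ : 0 < σ) (hb : b ≠ 0)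
    (heq : 4 * (p₁ - p₀ * Real.exp (-b)) * (p₁ - p₀ * Real.exp b) * b ^ 2
      = σ ^ 4 * (Real.exp b - Real.exp (-b)) ^ 2)
    (p : ℝ → ℝ)
    (hp : ∀ t : ℝ, p t =
      (p₁ - p₀ * Real.exp (-b)) / (Real.exp b - Real.exp (-b)) * Real.exp (b * t)
      + (p₁ - p₀ * Real.exp b) / (Real.exp (-b) - Real.exp b) * Real.exp (-(b * t))) :
    p 0 = p₀ ∧ p 1 = p₁ ∧
    ∀ t : ℝ, p t * deriv (deriv p) t - (deriv p t) ^ 2 + σ ^ 4 = 0 := by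
  have hD : Real.exp b - Real.exp (-b) ≠ 0 := by
    intro h
    have h2 := Real.exp_injective (sub_eq_zero.mp h)
    apply hb
    linarith
  have hD' : Real.exp (-b) - Real.exp b ≠ 0 := by
    intro h
    apply hD
    linarith
  have hAB : ((p₁ - p₀ * Real.exp (-b)) / (Real.exp b - Real.exp (-b))) *
      ((p₁ - p₀ * Real.exp b) / (Real.exp (-b) - Real.exp b)) * (4 * b ^ 2) = - σ ^ 4 := by
    rw [div_mul_div_comm, div_mul_eq_mul_div, div_eq_iff (mul_ne_zero hD hD')]
    linear_combination heq
  have hA0 : (p₁ - p₀ * Real.exp (-b)) / (Real.exp b - Real.exp (-b))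
      + (p₁ - p₀ * Real.exp b) / (Real.exp (-b) - Real.exp b) = p₀ := by
    rw [div_add_div _ _ hD hD', div_eq_iff (mul_ne_zero hD hD')]
    ring
  have hA1 : (p₁ - p₀ * Real.exp (-b)) / (Real.exp b - Real.exp (-b)) * Real.exp b
      + (p₁ - p₀ * Real.exp b) / (Real.exp (-b) - Real.exp b) * Real.exp (-b) = p₁ := by
    rw [div_mul_eq_mul_div, div_mul_eq_mul_div, div_add_div _ _ hD hD',
      div_eq_iff (mul_ne_zero hD hD')]
    ring
  generalize (p₁ - p₀ * Real.exp (-b)) / (Real.exp b - Real.exp (-b)) = A at *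
  generalize (p₁ - p₀ * Real.exp b) / (Real.exp (-b) - Real.exp b) = B at *
  have key : ∀ C E t : ℝ, HasDerivAt (fun t => C * Real.exp (b * t) + E * Real.exp (-(b * t)))
      ((C * b) * Real.exp (b * t) + (-(E * b)) * Real.exp (-(b * t))) t := by
    intro C E t
    have hl : HasDerivAt (fun t : ℝ => b * t) b t := by
      simpa using (hasDerivAt_id t).const_mul b
    have := (hl.exp.const_mul C).add (hl.neg.exp.const_mul E)
    refine this.congr_deriv ?_
    simp only [Pi.neg_apply]
    ring
  have hpe : p = fun t => A * Real.exp (b * t) + B * Real.exp (-(b * t)) := funext hp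
  have d1 : deriv p = fun t => (A * b) * Real.exp (b * t) + (-(B * b)) * Real.exp (-(b * t)) := by
    funext t
    rw [hpe]
    exact (key A B t).deriv
  refine ⟨by simpa [hp] using hA0, by simpa [hp] using hA1, fun t => ?_⟩
  have d2 := (key (A * b) (-(B * b)) t).deriv
  rw [d1, d2, hp t]
  have hE : Real.exp (b * t) * Real.exp (-(b * t)) = 1 := by
    rw [← Real.exp_add]; simp
  linear_combination hAB + 4 * A * B * b ^ 2 * hE
end

section
/- Let σ be a real number, ε a nonzero real number, and let P_t and Π_t be differentiable symmetric-n×n-matrix-valued functions on an open interval J satisfying dP_t/dt = −((1+ε)/(2ε))(Π_t P_t² + P_t² Π_t) + ((1−ε)/ε) P_t Π_t P_t + σ² I and dΠ_t/dt = ((1+ε)/(2ε))(Π_t² P_t + P_t Π_t²) − ((1−ε)/ε) Π_t P_t Π_t on J. Define A_t = −(1/2)(Π_t P_t + P_t Π_t) + (1/(2ε))(P_t Π_t − Π_t P_t). Then for all t ∈ J: dP_t/dt = A_t P_t + P_t A_tᵀ + σ² I and dΠ_t/dt = −Π_t A_t − A_tᵀ Π_t. -/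
open Matrix

/-- Let `σ` be real, `ε ≠ 0`, and let `P` and `Π` (here `Q`) be
differentiable symmetric-matrix-valued functions on an open interval `J = (a,b)` satisfying
`dP/dt = −((1+ε)/(2ε))(Π P² + P² Π) + ((1−ε)/ε) P Π P + σ² I` and
`dΠ/dt = ((1+ε)/(2ε))(Π² P + P Π²) − ((1−ε)/ε) Π P Π` (entrywise derivatives).
With `A = −(1/2)(Π P + P Π) + (1/(2ε))(P Π − Π P)`, on `J` we have
`dP/dt = A P + P Aᵀ + σ² I` and `dΠ/dt = −Π A − Aᵀ Π`. -/
theorem stmt_16 (n : ℕ) (σ ε a b : ℝ) (hε : ε ≠ 0)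
    (P Q : ℝ → Matrix (Fin n) (Fin n) ℝ)
    (hPsymm : ∀ t ∈ Set.Ioo a b, (P t).IsSymm)
    (hQsymm : ∀ t ∈ Set.Ioo a b, (Q t).IsSymm)
    (hP : ∀ t ∈ Set.Ioo a b, ∀ i j, HasDerivAt (fun s => P s i j)
      (((-((1 + ε) / (2 * ε))) • (Q t * P t ^ 2 + P t ^ 2 * Q t)
        + ((1 - ε) / ε) • (P t * Q t * P t) + σ ^ 2 • (1 : Matrix (Fin n) (Fin n) ℝ)) i j) t)
    (hQ : ∀ t ∈ Set.Ioo a b, ∀ i j, HasDerivAt (fun s => Q s i j)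
      ((((1 + ε) / (2 * ε)) • (Q t ^ 2 * P t + P t * Q t ^ 2)
        - ((1 - ε) / ε) • (Q t * P t * Q t)) i j) t)
    (A : ℝ → Matrix (Fin n) (Fin n) ℝ)
    (hA : ∀ t : ℝ, A t = -((1 / 2 : ℝ) • (Q t * P t + P t * Q t))
      + (1 / (2 * ε)) • (P t * Q t - Q t * P t)) :
    ∀ t ∈ Set.Ioo a b, ∀ i j,
      HasDerivAt (fun s => P s i j) ((A t * P t + P t * (A t)ᵀ + σ ^ 2 • 1) i j) t ∧
      HasDerivAt (fun s => Q s i j) ((-(Q t * A t) - (A t)ᵀ * Q t) i j) t := by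
  intro t ht i j
  have hp : (P t)ᵀ = P t := hPsymm t ht
  have hq : (Q t)ᵀ = Q t := hQsymm t ht
  have hT : (A t)ᵀ = -((1 / 2 : ℝ) • (Q t * P t + P t * Q t))
      + (1 / (2 * ε)) • (Q t * P t - P t * Q t) := by
    rw [hA]
    simp only [transpose_add, transpose_neg, transpose_smul, transpose_sub, transpose_mul, hp, hq]
    rw [add_comm (P t * Q t)]
  have h1 : (1 + ε) / (2 * ε) = 1 / (2 * ε) + 1 / 2 := by field_simp
  have h2 : (1 - ε) / ε = 2 * (1 / (2 * ε)) - 1 := by field_simp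
  have hP' := hP t ht i j
  have hQ' := hQ t ht i j
  rw [h1, h2] at hP' hQ'
  rw [hT, hA t]
  generalize 1 / (2 * ε) = c at *
  constructor
  · refine hP'.congr_deriv (congrArg (fun M : Matrix (Fin n) (Fin n) ℝ => M i j) ?_)
    simp only [pow_two, mul_add, add_mul, mul_sub, sub_mul, neg_mul, mul_neg, smul_mul_assoc,
      mul_smul_comm, mul_assoc]
    module
  · refine hQ'.congr_deriv (congrArg (fun M : Matrix (Fin n) (Fin n) ℝ => M i j) ?_)
    simp only [pow_two, mul_add, add_mul, mul_sub, sub_mul, neg_mul, mul_neg, smul_mul_assoc,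
      mul_smul_comm, mul_assoc]
    module
end

section
/- Let σ be a real number, ε a nonzero real number, and let P_t and Π_t be differentiable symmetric-n×n-matrix-valued functions on an open interval J satisfying dP_t/dt = −((1+ε)/(2ε))(Π_t P_t² + P_t² Π_t) + ((1−ε)/ε) P_t Π_t P_t + σ² I and dΠ_t/dt = ((1+ε)/(2ε))(Π_t² P_t + P_t Π_t²) − ((1−ε)/ε) Π_t P_t Π_t on J. Then the commutator P_t Π_t − Π_t P_t is constant on J, i.e. its derivative vanishes for all t ∈ J. Consequently the antisymmetric part (1/(2ε))(P_t Π_t − Π_t P_t) of the optimal system matrix A_t = −(1/2)(Π_t P_t + P_t Π_t) + (1/(2ε))(P_t Π_t − Π_t P_t) is constant. -/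
open Matrix

/-- Under the same stationarity equations as in Statement 16 (with `Π`
written `Q`), the commutator `P Π − Π P` has vanishing (entrywise) derivative on the open
interval `J = (a,b)`, and consequently the antisymmetric part `(1/(2ε))(P Π − Π P)` of the
optimal system matrix `A = −(1/2)(Π P + P Π) + (1/(2ε))(P Π − Π P)` is constant on `J`. -/
theorem stmt_17 (n : ℕ) (σ ε a b : ℝ) (hε : ε ≠ 0)
    (P Q : ℝ → Matrix (Fin n) (Fin n) ℝ)
    (hPsymm : ∀ t ∈ Set.Ioo a b, (P t).IsSymm)
    (hQsymm : ∀ t ∈ Set.Ioo a b, (Q t).IsSymm)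
    (hP : ∀ t ∈ Set.Ioo a b, ∀ i j, HasDerivAt (fun s => P s i j)
      (((-((1 + ε) / (2 * ε))) • (Q t * P t ^ 2 + P t ^ 2 * Q t)
        + ((1 - ε) / ε) • (P t * Q t * P t)
        + σ ^ 2 • (1 : Matrix (Fin n) (Fin n) ℝ)) i j) t)
    (hQ : ∀ t ∈ Set.Ioo a b, ∀ i j, HasDerivAt (fun s => Q s i j)
      ((((1 + ε) / (2 * ε)) • (Q t ^ 2 * P t + P t * Q t ^ 2)
        - ((1 - ε) / ε) • (Q t * P t * Q t)) i j) t) :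
    (∀ t ∈ Set.Ioo a b, ∀ i j,
      HasDerivAt (fun s => (P s * Q s - Q s * P s) i j) 0 t) ∧
    ∀ s ∈ Set.Ioo a b, ∀ t ∈ Set.Ioo a b,
      (1 / (2 * ε)) • (P s * Q s - Q s * P s) = (1 / (2 * ε)) • (P t * Q t - Q t * P t) := by
  have key : ∀ t ∈ Set.Ioo a b, ∀ i j,
      HasDerivAt (fun s => (P s * Q s - Q s * P s) i j) 0 t := by
    intro t ht i j
    have hP' := hP t ht
    have hQ' := hQ t ht
    generalize hc : (1 + ε) / (2 * ε) = c at hP' hQ'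
    generalize hd : (1 - ε) / ε = d at hP' hQ'
    generalize hA : (-c) • (Q t * P t ^ 2 + P t ^ 2 * Q t) + d • (P t * Q t * P t)
        + σ ^ 2 • (1 : Matrix (Fin n) (Fin n) ℝ) = A at hP'
    generalize hB : c • (Q t ^ 2 * P t + P t * Q t ^ 2) - d • (Q t * P t * Q t) = B at hQ'
    have h0 : (A * Q t + P t * B) - (B * P t + Q t * A) = 0 := by
      rw [← hA, ← hB]
      simp only [pow_two, mul_add, add_mul, mul_sub, sub_mul, smul_mul_assoc, mul_smul_comm,
        smul_add, neg_smul, one_mul, mul_one, mul_assoc, neg_mul, mul_neg]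
      abel
    have h1 : HasDerivAt (fun s => (P s * Q s) i j) ((A * Q t + P t * B) i j) t := by
      simp only [Matrix.add_apply, Matrix.mul_apply, ← Finset.sum_add_distrib]
      exact HasDerivAt.fun_sum fun k _ => (hP' i k).mul (hQ' k j)
    have h2 : HasDerivAt (fun s => (Q s * P s) i j) ((B * P t + Q t * A) i j) t := by
      simp only [Matrix.add_apply, Matrix.mul_apply, ← Finset.sum_add_distrib]
      exact HasDerivAt.fun_sum fun k _ => (hQ' i k).mul (hP' k j)
    have h3 := h1.sub h2
    have h4 : (A * Q t + P t * B) i j - (B * P t + Q t * A) i j = 0 := by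
      rw [← Matrix.sub_apply, h0]; rfl
    rw [h4] at h3
    exact h3
  refine ⟨key, fun s hs t ht => ?_⟩
  congr 1
  ext i j
  refine isOpen_Ioo.is_const_of_deriv_eq_zero (convex_Ioo a b).isPreconnected
    (f := fun s => (P s * Q s - Q s * P s) i j) ?_ ?_ hs ht
  · exact fun x hx => (key x hx i j).differentiableAt.differentiableWithinAt
  · exact fun x hx => (key x hx i j).deriv
end
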